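/- Let H be a separable real Hilbert space and let μ be a Gaussian Borel probability measure on H which is nondegenerate, in the sense that for every nonzero continuous linear functional L : H → ℝ the variance of L under μ is strictly positive. If u, v : H → ℝ are continuous functions with u(x) = v(x) for μ-almost every x ∈ H, then u(x) = v(x) for every x ∈ H. -/

import Mathlib

open MeasureTheory ProbabilityTheory
open scoped NNReal ENNReal

/-!
Rotation invariance of `μ ⊗ μ` makes the support of a centred Gaussian measure `μ` stable under
`(x, y) ↦ cos θ • x + sin θ • y`, hence a closed linear subspace. A continuous functional vanishing
on it has variance zero, so for nondegenerate `μ` the Hahn–Banach theorem leaves only the whole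
space: `μ` charges every nonempty open set. Centring is a translation, and completeness can be
assumed after passing to the completion.
-/

open Topology UniformSpace

section Support

variable {X Y : Type*} [TopologicalSpace X] [TopologicalSpace Y] [MeasurableSpace X]
  [MeasurableSpace Y]

lemma apply_mem_support_map {μ : Measure X} {f : X → Y} {x : X} (hfx : ContinuousAt f x)
    (hf : AEMeasurable f μ) (hx : x ∈ μ.support) : f x ∈ (μ.map f).support := by
  rw [Measure.mem_support_iff_forall] at hx ⊢
  exact fun V hV ↦ (hx _ (hfx hV)).trans_le (Measure.le_map_apply hf V)

lemma mk_mem_support_prod {μ : Measure X} {ν : Measure Y} [SFinite ν] {x : X} {y : Y}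
    (hx : x ∈ μ.support) (hy : y ∈ ν.support) : (x, y) ∈ (μ.prod ν).support := by
  rw [Measure.mem_support_iff_forall] at hx hy ⊢
  intro W hW
  obtain ⟨U, hU, V, hV, hUV⟩ := mem_nhds_prod_iff.1 hW
  calc 0 < μ U * ν V := ENNReal.mul_pos (hx U hU).ne' (hy V hV).ne'
    _ = μ.prod ν (U ×ˢ V) := (Measure.prod_prod U V).symm
    _ ≤ μ.prod ν W := measure_mono hUV

lemma isOpenPosMeasure_of_support_eq_univ {μ : Measure X} (h : μ.support = Set.univ) :
    μ.IsOpenPosMeasure where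
  open_pos U hU := fun ⟨x, hx⟩ ↦
    ((Measure.mem_support_iff_forall x).1 (h ▸ Set.mem_univ x) U (hU.mem_nhds hx)).ne'

lemma isOpenPosMeasure_of_map_of_isInducing [OpensMeasurableSpace Y] {μ : Measure X} {f : X → Y}
    (hf : IsInducing f) (hfm : AEMeasurable f μ) (h : (μ.map f).IsOpenPosMeasure) :
    μ.IsOpenPosMeasure where
  open_pos U hU hne := by
    obtain ⟨V, hV, rfl⟩ := hf.isOpen_iff.1 hU
    rw [← Measure.map_apply_of_aemeasurable hfm hV.measurableSet]
    exact hV.measure_ne_zero _ (Set.nonempty_of_nonempty_preimage hne)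

end Support

lemma exists_submodule_coe_eq_of_rotation_mem {E : Type*} [AddCommGroup E] [Module ℝ E]
    {s : Set E} (hs : s.Nonempty)
    (hrot : ∀ θ : ℝ, ∀ x ∈ s, ∀ y ∈ s, Real.cos θ • x + Real.sin θ • y ∈ s) :
    ∃ K : Submodule ℝ E, (K : Set E) = s := by
  have neg_mem : ∀ x ∈ s, -x ∈ s := fun x hx ↦ by simpa using hrot Real.pi x hx x hx
  have zero_mem : (0 : E) ∈ s := by
    obtain ⟨x, hx⟩ := hs
    simpa using hrot (Real.pi / 4) x hx (-x) (neg_mem x hx)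
  have scaled_add_mem : ∀ x ∈ s, ∀ y ∈ s, (√2 / 2) • (x + y) ∈ s := fun x hx y hy ↦ by
    simpa using hrot (Real.pi / 4) x hx y hy
  have sqrt_two_smul_mem : ∀ x ∈ s, √2 • x ∈ s := fun x hx ↦ by
    simpa [← two_smul ℝ x, smul_smul] using scaled_add_mem x hx x hx
  have add_mem : ∀ x ∈ s, ∀ y ∈ s, x + y ∈ s := fun x hx y hy ↦ by
    have h := sqrt_two_smul_mem _ (scaled_add_mem x hx y hy)
    have hc : √2 * (√2 / 2) = 1 := by rw [← mul_div_assoc, Real.mul_self_sqrt zero_le_two]; norm_num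
    rwa [smul_smul, hc, one_smul] at h
  have smul_mem_of_unit : ∀ c : ℝ, 0 ≤ c → c ≤ 1 → ∀ x ∈ s, c • x ∈ s := fun c h0 h1 x hx ↦ by
    simpa [Real.cos_arccos (by linarith) h1] using hrot (Real.arccos c) x hx 0 zero_mem
  let G : AddSubgroup E :=
    { carrier := s
      add_mem' := fun hx hy ↦ add_mem _ hx _ hy
      zero_mem' := zero_mem
      neg_mem' := fun hx ↦ neg_mem _ hx }
  refine ⟨{ G with smul_mem' := fun c x hx ↦ ?_ }, rfl⟩
  rw [← Int.floor_add_fract c, add_smul, Int.cast_smul_eq_zsmul]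
  exact add_mem _ (G.zsmul_mem hx _) _
    (smul_mem_of_unit _ (Int.fract_nonneg c) (Int.fract_lt_one c).le x hx)

lemma exists_strongDual_ne_zero_of_isClosed {E : Type*} [TopologicalSpace E] [AddCommGroup E]
    [Module ℝ E] [IsTopologicalAddGroup E] [ContinuousSMul ℝ E] [LocallyConvexSpace ℝ E]
    {K : Submodule ℝ E} (hK : IsClosed (K : Set E)) (hne : K ≠ ⊤) :
    ∃ L : StrongDual ℝ E, L ≠ 0 ∧ ∀ x ∈ K, L x = 0 := by
  obtain ⟨z, -, hz⟩ := SetLike.exists_of_lt (lt_top_iff_ne_top.2 hne)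
  obtain ⟨L, b, hb, hbz⟩ := geometric_hahn_banach_closed_point K.convex hK hz
  have eq_zero : ∀ x ∈ K, L x = 0 := fun x hx ↦ by
    by_contra hLx
    simpa [hLx] using hb _ (K.smul_mem (b / L x) hx)
  refine ⟨L, ?_, eq_zero⟩
  rintro rfl
  exact (hb 0 K.zero_mem).not_gt hbz

section Nondegenerate

/-- A measure is nondegenerate if every nonzero continuous linear functional has positive variance.
As `Var[L; μ]` is a real number, with value `0` where the variance is infinite, this includes
finiteness of the variances. -/
def IsNondegenerate {E : Type*} [TopologicalSpace E] [AddCommGroup E] [Module ℝ E]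
    [MeasurableSpace E] (μ : Measure E) : Prop :=
  ∀ L : StrongDual ℝ E, L ≠ 0 → 0 < Var[L; μ]

variable {E F : Type*} [TopologicalSpace E] [AddCommGroup E] [Module ℝ E] [MeasurableSpace E]
  [BorelSpace E] [TopologicalSpace F] [AddCommGroup F] [Module ℝ F] [MeasurableSpace F]
  [BorelSpace F] {μ : Measure E}

lemma IsNondegenerate.map_sub_const [ContinuousSub E] [IsProbabilityMeasure μ]
    (hμ : IsNondegenerate μ) (c : E) : IsNondegenerate (μ.map (· - c)) := fun L hL ↦ by
  have hcomp : L ∘ (· - c) = fun x ↦ L x - L c := by ext; simp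
  rw [variance_map (by fun_prop) (by fun_prop), hcomp,
    variance_sub_const L.continuous.measurable.aestronglyMeasurable]
  exact hμ L hL

lemma IsNondegenerate.map_of_denseRange (hμ : IsNondegenerate μ) {T : E →L[ℝ] F}
    (hT : DenseRange T) : IsNondegenerate (μ.map T) := fun L hL ↦ by
  rw [variance_map (by fun_prop) (by fun_prop)]
  refine hμ (L ∘L T) fun hLT ↦ hL (DFunLike.coe_injective ?_)
  exact hT.equalizer L.continuous continuous_zero (congrArg DFunLike.coe hLT)

end Nondegenerate

section Gaussian

variable {E : Type*} [NormedAddCommGroup E] [NormedSpace ℝ E] [SecondCountableTopology E]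
  [MeasurableSpace E] [BorelSpace E] {μ : Measure E} [IsGaussian μ]

lemma rotation_mem_support_of_centered [CompleteSpace E] (h0 : μ[id] = 0) (θ : ℝ) {x y : E}
    (hx : x ∈ μ.support) (hy : y ∈ μ.support) :
    Real.cos θ • x + Real.sin θ • y ∈ μ.support := by
  have hmarginal : ((μ.prod μ).map (ContinuousLinearMap.rotation θ)).map Prod.fst = μ := by
    rw [IsGaussian.map_rotation_eq_self h0, Measure.map_fst_prod, measure_univ, one_smul]
  have hrot := apply_mem_support_map (f := ContinuousLinearMap.rotation θ) (by fun_prop)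
    (by fun_prop) (mk_mem_support_prod hx hy)
  simpa only [hmarginal, ContinuousLinearMap.rotation_apply] using
    apply_mem_support_map continuous_fst.continuousAt (by fun_prop) hrot

lemma isOpenPosMeasure_of_isNondegenerate_of_centered [CompleteSpace E] (h0 : μ[id] = 0)
    (hμ : IsNondegenerate μ) : μ.IsOpenPosMeasure := by
  obtain ⟨K, hK⟩ := exists_submodule_coe_eq_of_rotation_mem
    (Measure.nonempty_support (IsProbabilityMeasure.ne_zero μ))
    fun θ _ hx _ hy ↦ rotation_mem_support_of_centered h0 θ hx hy
  suffices K = ⊤ from isOpenPosMeasure_of_support_eq_univ (by rw [← hK, this, Submodule.top_coe])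
  by_contra hne
  obtain ⟨L, hL, hLK⟩ :=
    exists_strongDual_ne_zero_of_isClosed (hK ▸ Measure.isClosed_support) hne
  have hL_ae : L =ᵐ[μ] 0 := by
    filter_upwards [Measure.support_mem_ae (μ := μ)] with x hx
    exact hLK x (hK.ge hx)
  exact (hμ L hL).ne' ((variance_congr hL_ae).trans (variance_zero μ))

lemma isOpenPosMeasure_of_isNondegenerate_of_completeSpace [CompleteSpace E]
    (hμ : IsNondegenerate μ) : μ.IsOpenPosMeasure := by
  let m : E := μ[id]
  have hcentered : (μ.map (· - m))[id] = 0 := by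
    rw [integral_map (by fun_prop) (by fun_prop)]
    simp only [id_eq]
    rw [integral_sub IsGaussian.integrable_fun_id (integrable_const _)]
    simp [m]
  exact isOpenPosMeasure_of_map_of_isInducing (f := (· - m)) (Homeomorph.subRight m).isInducing
    (by fun_prop)
    (isOpenPosMeasure_of_isNondegenerate_of_centered hcentered (hμ.map_sub_const m))

theorem isOpenPosMeasure_of_isNondegenerate (hμ : IsNondegenerate μ) : μ.IsOpenPosMeasure := by
  borelize (Completion E)
  have : SecondCountableTopology (Completion E) := UniformSpace.secondCountable_of_separable _
  let ι : E →L[ℝ] Completion E := Completion.toComplL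
  exact isOpenPosMeasure_of_map_of_isInducing (f := ι)
    (Completion.isUniformInducing_coe E).isInducing (by fun_prop)
    (isOpenPosMeasure_of_isNondegenerate_of_completeSpace
      (hμ.map_of_denseRange Completion.denseRange_coe))

theorem continuous_eq_of_ae_eq_nondegenerate_gaussian_general {Y : Type*} [TopologicalSpace Y]
    [T2Space Y] (hμ : IsNondegenerate μ) {u v : E → Y} (hu : Continuous u) (hv : Continuous v)
    (hae : u =ᵐ[μ] v) : u = v :=
  have := isOpenPosMeasure_of_isNondegenerate hμ
  Measure.eq_of_ae_eq hae hu hv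

end Gaussian

/-- If `μ` is a nondegenerate Gaussian Borel probability measure on a separable real
Hilbert space and two continuous real functions agree `μ`-almost everywhere, then they
agree everywhere. -/
theorem continuous_eq_of_ae_eq_nondegenerate_gaussian
    {H : Type*} [NormedAddCommGroup H] [InnerProductSpace ℝ H] [CompleteSpace H]
    [SecondCountableTopology H] [MeasurableSpace H] [BorelSpace H]
    (μ : Measure H) [IsProbabilityMeasure μ]
    (hGauss : ∀ L : H →L[ℝ] ℝ, ∃ (m : ℝ) (v : ℝ≥0), μ.map L = gaussianReal m v)
    (hnondeg : ∀ L : H →L[ℝ] ℝ, L ≠ 0 →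
      0 < ∫ x, (L x - ∫ y, L y ∂μ) ^ 2 ∂μ)
    (u v : H → ℝ) (hu : Continuous u) (hv : Continuous v)
    (hae : ∀ᵐ x ∂μ, u x = v x) :
    ∀ x : H, u x = v x := by
  have := isGaussian_of_map_eq_gaussianReal hGauss
  exact congrFun <| continuous_eq_of_ae_eq_nondegenerate_gaussian_general (fun L hL ↦
    (variance_eq_integral L.continuous.aemeasurable).symm ▸ hnondeg L hL) hu hv hae
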